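/- Let 𝔏 be a complex Hilbert space, A an invertible positive bounded operator on 𝔏, N = A⊗U on ℓ²(ℤ,𝔏), λ an extended eigenvalue of N, and ι : ℓ²(ℕ,𝔏) → ℓ²(ℤ,𝔏) the canonical isometric embedding (extending a sequence by 0 on negative indices). Then a bounded operator X on ℓ²(ℕ,𝔏) admits a bounded operator X̂ on ℓ²(ℤ,𝔏) with X̂∘ι = ι∘X and N∘X̂ = λ·(X̂∘N) if and only if X belongs to the closure, in the weak operator topology of the bounded operators on ℓ²(ℕ,𝔏) (which for convex sets coincides with the weak-* closure), of the linear span of the operators (I⊗Sⁿ)∘D_{A,L,λ} over n ∈ ℕ and bounded operators L on 𝔏 with A∘L = |λ|·(L∘A), where I⊗Sⁿ is the n-fold shift ((I⊗Sⁿ)x)_{k+n} = x_k, ((I⊗Sⁿ)x)_j = 0 for j < n, and D_{A,L,λ} is the bounded diagonal operator (D_{A,L,λ}x)ₖ = λ^{-k}·Aᵏ L A^{-k} xₖ. -/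

import Mathlib

open ContinuousLinearMap

noncomputable section

/-- The modulus `|T| = (T*T)^(1/2)` of a bounded operator on a complex Hilbert space. -/
def modulus {H : Type*} [NormedAddCommGroup H] [InnerProductSpace ℂ H] [CompleteSpace H]
    (T : H →L[ℂ] H) : H →L[ℂ] H :=
  CFC.sqrt (adjoint T ∘L T)

/-- A bounded operator is quasinormal if it commutes with its modulus. -/
def IsQuasinormal {H : Type*} [NormedAddCommGroup H] [InnerProductSpace ℂ H] [CompleteSpace H]
    (T : H →L[ℂ] H) : Prop :=
  T ∘L modulus T = modulus T ∘L T

/-- `m_T = inf {⟨Tx,x⟩ : ‖x‖ = 1}` (real part of the inner product). -/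
def mval {H : Type*} [NormedAddCommGroup H] [InnerProductSpace ℂ H]
    (T : H →L[ℂ] H) : ℝ :=
  sInf {r : ℝ | ∃ x : H, ‖x‖ = 1 ∧ r = T.reApplyInnerSelf x}

/-- The set of intertwining values `Λ_int(R,M)`. -/
def intertwiningValues {H K : Type*} [NormedAddCommGroup H] [InnerProductSpace ℂ H]
    [NormedAddCommGroup K] [InnerProductSpace ℂ K]
    (R : H →L[ℂ] H) (M : K →L[ℂ] K) : Set ℂ :=
  {l : ℂ | ∃ X : K →L[ℂ] H, X ≠ 0 ∧ R ∘L X = l • (X ∘L M)}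

/-- The set of extended eigenvalues `σ_ext(T)`. -/
def extSpectrum {H : Type*} [NormedAddCommGroup H] [InnerProductSpace ℂ H]
    (T : H →L[ℂ] H) : Set ℂ :=
  {l : ℂ | ∃ X : H →L[ℂ] H, X ≠ 0 ∧ T ∘L X = l • (X ∘L T)}

/-- The set `𝒜_r(R,A)` of operators `L` with `‖Rⁿ(Lx)‖ ≤ c·rⁿ·‖Aⁿx‖` for all `n, x`. -/
def calA {H 𝔏 : Type*} [NormedAddCommGroup H] [InnerProductSpace ℂ H]
    [NormedAddCommGroup 𝔏] [InnerProductSpace ℂ 𝔏]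
    (r : ℝ) (R : H →L[ℂ] H) (A : 𝔏 →L[ℂ] 𝔏) : Set (𝔏 →L[ℂ] H) :=
  {L : 𝔏 →L[ℂ] H | ∃ c : ℝ, 0 ≤ c ∧
    ∀ (n : ℕ) (x : 𝔏), ‖(R ^ n) (L x)‖ ≤ c * r ^ n * ‖(A ^ n) x‖}

/-- An operator is pure if it has no nonzero reducing subspace on which it is normal. -/
def IsPure {H : Type*} [NormedAddCommGroup H] [InnerProductSpace ℂ H] [CompleteSpace H]
    (T : H →L[ℂ] H) : Prop :=
  ∀ M : Submodule ℂ H, IsClosed (M : Set H) → (∀ x ∈ M, T x ∈ M) →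
    (∀ x ∈ M, adjoint T x ∈ M) →
    (∀ x ∈ M, T (adjoint T x) = adjoint T (T x)) → M = ⊥

universe u

/-- An operator is subnormal if it has a normal extension on a larger Hilbert space. -/
def IsSubnormal {F : Type*} [NormedAddCommGroup F] [InnerProductSpace ℂ F] [CompleteSpace F]
    (T : F →L[ℂ] F) : Prop :=
  ∃ (K : Type u) (_ : NormedAddCommGroup K) (_ : InnerProductSpace ℂ K) (_ : CompleteSpace K)
    (j : F →ₗᵢ[ℂ] K) (M : K →L[ℂ] K),
      adjoint M ∘L M = M ∘L adjoint M ∧ ∀ x : F, M (j x) = j (T x)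

end

open Filter Topology
open scoped lp

/-!
Write `r = |λ|` and `ω = |λ| / λ`. Since `N` is normal with `N*N = A² ⊗ I`, the
Fuglede–Putnam theorem turns `N X̂ = λ X̂ N` into `A² Xᵢⱼ = r² Xᵢⱼ A²` for every block of `X̂`; as
`A ≥ 0` this is `A Xᵢⱼ = r Xᵢⱼ A`, and then the equation itself says `Xᵢ₊₁,ⱼ₊₁ = ω Xᵢⱼ`. Hence the
operators that lift are the lower triangular ones satisfying the same two relations, since such an
operator extends to `ℓ²(ℤ)` as a limit of its rescaled translates. They form a space that is closed
in the weak operator topology and contains the generators, whose blocks are `λ⁻ᵏ Aᵏ L A⁻ᵏ = ωᵏ L`.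
Conversely, the Fejér means of the diagonals of such an operator `X` converge to it weakly,
because they are averages of compressions of `X` to windows of consecutive sites and so have norm
at most `‖X‖`.
-/

section Limits

variable {𝕜 E F ι : Type*} [NontriviallyNormedField 𝕜] [NormedAddCommGroup E] [NormedSpace 𝕜 E]
  [NormedAddCommGroup F] [NormedSpace 𝕜 F] {l : Filter ι} [l.NeBot]
  {T : ι → E →L[𝕜] F} {C : ℝ} {s : Set E}

theorem isClosed_setOf_cauchy_map_apply (hT : ∀ n, ‖T n‖ ≤ C) :
    IsClosed {x | Cauchy (l.map fun n => T n x)} := by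
  refine isClosed_of_closure_subset fun x hx => Metric.cauchy_iff.2 ⟨inferInstance, fun ε hε => ?_⟩
  have hsmall : ∀ᶠ y in 𝓝 x, C * ‖x - y‖ < ε / 3 := by
    have hcont : Continuous fun y => C * ‖x - y‖ := by fun_prop
    exact hcont.continuousAt.eventually_lt_const (by simpa using by positivity)
  obtain ⟨y, hy, hxy⟩ := ((mem_closure_iff_frequently.1 hx).and_eventually hsmall).exists
  obtain ⟨t, ht, hdist⟩ := (Metric.cauchy_iff.1 hy).2 (ε / 3) (by positivity)
  refine ⟨(fun n => T n x) '' ((fun n => T n y) ⁻¹' t), image_mem_map ht, ?_⟩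
  rintro _ ⟨n, hn, rfl⟩ _ ⟨m, hm, rfl⟩
  have hclose : ∀ k, dist (T k x) (T k y) < ε / 3 := fun k => by
    rw [dist_eq_norm, ← map_sub]
    exact ((T k).le_of_opNorm_le (hT k) _).trans_lt hxy
  linarith [dist_triangle4 (T n x) (T n y) (T m y) (T m x), hclose n, hclose m,
    hdist _ hn _ hm, dist_comm (T m x) (T m y)]

theorem exists_tendsto_of_dense_span [CompleteSpace F] (hT : ∀ n, ‖T n‖ ≤ C)
    (hs : Dense (Submodule.span 𝕜 s : Set E))
    (h : ∀ x ∈ s, ∃ y, Tendsto (fun n => T n x) l (𝓝 y)) :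
    ∃ T₀ : E →L[𝕜] F, ‖T₀‖ ≤ C ∧ ∀ x, Tendsto (fun n => T n x) l (𝓝 (T₀ x)) := by
  have hspan : ∀ x ∈ Submodule.span 𝕜 s, Cauchy (l.map fun n => T n x) := by
    intro x hx
    refine cauchy_map_iff_exists_tendsto.2 ?_
    induction hx using Submodule.span_induction with
    | mem x hx => exact h x hx
    | zero => exact ⟨0, by simp⟩
    | add x y _ _ hx hy =>
      obtain ⟨⟨u, hu⟩, v, hv⟩ := And.intro hx hy
      exact ⟨u + v, by simpa using hu.add hv⟩
    | smul c x _ hx =>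
      obtain ⟨u, hu⟩ := hx
      exact ⟨c • u, by simpa using hu.const_smul c⟩
  have hlim : ∀ x, ∃ y, Tendsto (fun n => T n x) l (𝓝 y) := fun x =>
    cauchy_map_iff_exists_tendsto.1 <|
      (isClosed_setOf_cauchy_map_apply hT).closure_subset_iff.2 hspan (hs x)
  choose f hf using hlim
  have hC : 0 ≤ C := (norm_nonneg _).trans (hT l.nonempty_of_neBot.some)
  refine ⟨ofTendstoOfBoundedRange (l := l) f T (tendsto_pi_nhds.2 hf) ?_, ?_, hf⟩
  · exact isBounded_iff_forall_norm_le.2 ⟨C, Set.forall_mem_range.2 hT⟩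
  · exact opNorm_le_bound _ hC fun x => le_of_tendsto (hf x).norm <|
      .of_forall fun n => (T n).le_of_opNorm_le (hT n) x

theorem tendsto_of_dense_span [CompleteSpace F] {T₀ : E →L[𝕜] F} (hT : ∀ n, ‖T n‖ ≤ C)
    (hs : Dense (Submodule.span 𝕜 s : Set E))
    (h : ∀ x ∈ s, Tendsto (fun n => T n x) l (𝓝 (T₀ x))) :
    ‖T₀‖ ≤ C ∧ ∀ x, Tendsto (fun n => T n x) l (𝓝 (T₀ x)) := by
  obtain ⟨T₁, hC, hT₁⟩ := exists_tendsto_of_dense_span hT hs fun x hx => ⟨_, h x hx⟩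
  obtain rfl : T₁ = T₀ := ContinuousLinearMap.ext_on hs fun x hx =>
    tendsto_nhds_unique (hT₁ x) (h x hx)
  exact ⟨hC, hT₁⟩

end Limits

section Hilbert

variable {𝕜 H K ι : Type*} [RCLike 𝕜] [NormedAddCommGroup H] [InnerProductSpace 𝕜 H]
  [NormedAddCommGroup K] [InnerProductSpace 𝕜 K] [CompleteSpace K]

theorem tendsto_ofCLM_of_dense_span {T : ι → H →L[𝕜] K} {T₀ : H →L[𝕜] K} {C : ℝ} {l : Filter ι}
    [l.NeBot] {s : Set H} {t : Set K} (hT : ∀ n, ‖T n‖ ≤ C)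
    (hs : Dense (Submodule.span 𝕜 s : Set H)) (ht : Dense (Submodule.span 𝕜 t : Set K))
    (h : ∀ x ∈ s, ∀ y ∈ t, Tendsto (fun n => inner 𝕜 (T n x) y) l (𝓝 (inner 𝕜 (T₀ x) y))) :
    Tendsto (fun n => ContinuousLinearMapWOT.ofCLM (T n)) l (𝓝 (.ofCLM T₀)) := by
  refine ContinuousLinearMapWOT.tendsto_iff_forall_inner_apply_tendsto.2 fun x y => ?_
  have hx : ∀ x ∈ s, Tendsto (fun n => inner 𝕜 y (T n x)) l (𝓝 (inner 𝕜 y (T₀ x))) := by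
    intro x hx
    have hle : ∀ n, ‖innerSL 𝕜 (T n x)‖ ≤ C * ‖x‖ := fun n => by
      simpa using (T n).le_of_opNorm_le (hT n) x
    have := (tendsto_of_dense_span (T₀ := innerSL 𝕜 (T₀ x)) hle ht (h x hx)).2 y
    simpa [Function.comp_def] using (RCLike.continuous_conj.tendsto _).comp this
  have hle : ∀ n, ‖innerSL 𝕜 y ∘L T n‖ ≤ ‖y‖ * C := fun n =>
    (opNorm_comp_le _ _).trans (by rw [innerSL_apply_norm]; gcongr; exact hT n)
  exact (tendsto_of_dense_span (T₀ := innerSL 𝕜 y ∘L T₀) hle hs hx).2 x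

theorem norm_sum_adjoint_comp_comp_le [CompleteSpace H] (X : K →L[𝕜] K) (Q : ι → H →L[𝕜] K)
    (s : Finset ι) {c : ℝ} (hc : 0 ≤ c)
    (hQ : ∀ x, ∑ m ∈ s, ‖Q m x‖ ^ 2 ≤ c * ‖x‖ ^ 2) :
    ‖∑ m ∈ s, adjoint (Q m) ∘L X ∘L Q m‖ ≤ c * ‖X‖ := by
  refine opNorm_le_of_re_inner_le (𝕜 := 𝕜) (by positivity) fun x y hx hy => ?_
  have hsqrt : ∀ z : H, ‖z‖ = 1 → √(∑ m ∈ s, ‖Q m z‖ ^ 2) ≤ √c := fun z hz =>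
    Real.sqrt_le_sqrt (by simpa [hz] using hQ z)
  calc RCLike.re (inner 𝕜 ((∑ m ∈ s, adjoint (Q m) ∘L X ∘L Q m) x) y)
      = ∑ m ∈ s, RCLike.re (inner 𝕜 (X (Q m x)) (Q m y)) := by
        simp [sum_apply, sum_inner, adjoint_inner_left]
    _ ≤ ∑ m ∈ s, ‖X‖ * (‖Q m x‖ * ‖Q m y‖) := by
        gcongr with m
        rw [← mul_assoc]
        exact (re_inner_le_norm _ _).trans (by gcongr; exact X.le_opNorm _)
    _ ≤ ‖X‖ * (√(∑ m ∈ s, ‖Q m x‖ ^ 2) * √(∑ m ∈ s, ‖Q m y‖ ^ 2)) := by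
        rw [← Finset.mul_sum]
        gcongr
        exact Real.sum_mul_le_sqrt_mul_sqrt _ _ _
    _ ≤ ‖X‖ * (√c * √c) := by
        gcongr ‖X‖ * (?_ * ?_)
        exacts [hsqrt x hx, hsqrt y hy]
    _ = c * ‖X‖ := by rw [Real.mul_self_sqrt hc, mul_comm]

end Hilbert

section Entries

variable {𝕜 α β γ E F G : Type*} [RCLike 𝕜] [DecidableEq α]
  [NormedAddCommGroup E] [NormedSpace 𝕜 E] [NormedAddCommGroup F] [NormedSpace 𝕜 F]
  [NormedAddCommGroup G] [NormedSpace 𝕜 G]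

/-- The `(i, j)` block of the operator matrix of a bounded operator between `ℓ²` spaces. -/
noncomputable def matrixEntry (i : β) (j : α) :
    (ℓ²(α, E) →L[𝕜] ℓ²(β, F)) →ₗ[𝕜] E →L[𝕜] F where
  toFun T := lp.evalCLM 𝕜 (fun _ => F) 2 i ∘L T ∘L lp.singleContinuousLinearMap 𝕜 (fun _ => E) 2 j
  map_add' _ _ := by ext; simp
  map_smul' _ _ := by ext; simp

@[simp]
theorem matrixEntry_apply (T : ℓ²(α, E) →L[𝕜] ℓ²(β, F)) (i : β) (j : α) (v : E) :
    matrixEntry i j T v = T (lp.single 2 j v) i :=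
  rfl

theorem ext_matrixEntry {S T : ℓ²(α, E) →L[𝕜] ℓ²(β, F)}
    (h : ∀ i j, matrixEntry i j S = matrixEntry i j T) : S = T :=
  lp.ext_continuousLinearMap ENNReal.ofNat_ne_top fun j => by
    ext v i
    exact DFunLike.congr_fun (h i j) v

variable (𝕜 α E) in
theorem dense_span_single :
    Dense (Submodule.span 𝕜 {x : ℓ²(α, E) | ∃ j v, x = lp.single 2 j v} : Set ℓ²(α, E)) := fun x =>
  mem_closure_of_tendsto (lp.hasSum_single ENNReal.ofNat_ne_top x) <| .of_forall fun _ =>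
    Submodule.sum_mem _ fun j _ => Submodule.subset_span ⟨j, x j, rfl⟩

variable [DecidableEq β]

/-- `T` is the weighted shift along `e : α → β` with weights `C`: it carries the vector `v` at
site `a` to the vector `C a v` at site `e a`. -/
def IsWeightedShift (e : α → β) (C : α → E →L[𝕜] F) (T : ℓ²(α, E) →L[𝕜] ℓ²(β, F)) : Prop :=
  ∀ a v, T (lp.single 2 a v) = lp.single 2 (e a) (C a v)

namespace IsWeightedShift

variable {e : α → β} {C : α → E →L[𝕜] F} {T : ℓ²(α, E) →L[𝕜] ℓ²(β, F)}

theorem apply_apply (hT : IsWeightedShift e C T) (he : Function.Injective e) (x : ℓ²(α, E))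
    (a : α) : T x (e a) = C a (x a) := by
  suffices h : lp.evalCLM 𝕜 (fun _ => F) 2 (e a) ∘L T = C a ∘L lp.evalCLM 𝕜 (fun _ => E) 2 a from
    DFunLike.congr_fun h x
  refine lp.ext_continuousLinearMap ENNReal.ofNat_ne_top fun b => ?_
  ext v
  change T (lp.single 2 b v) (e a) = C a (lp.single (E := fun _ => E) 2 b v a)
  rw [hT]
  obtain rfl | hab := eq_or_ne a b
  · simp
  · rw [lp.single_apply_ne _ _ _ hab, lp.single_apply_ne _ _ _ (he.ne hab), map_zero]

theorem apply_of_notMem_range (hT : IsWeightedShift e C T) (x : ℓ²(α, E)) {b : β}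
    (hb : b ∉ Set.range e) : T x b = 0 := by
  suffices h : lp.evalCLM 𝕜 (fun _ => F) 2 b ∘L T = 0 from DFunLike.congr_fun h x
  refine lp.ext_continuousLinearMap ENNReal.ofNat_ne_top fun a => ?_
  ext v
  change T (lp.single 2 a v) b = 0
  rw [hT, lp.single_apply_ne]
  exact fun h => hb ⟨a, h.symm⟩

theorem of_apply (he : Function.Injective e) (h : ∀ x a, T x (e a) = C a (x a))
    (h₀ : ∀ x, ∀ b ∉ Set.range e, T x b = 0) : IsWeightedShift e C T := by
  intro a v
  ext b
  by_cases hb : b ∈ Set.range e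
  · obtain ⟨b, rfl⟩ := hb
    obtain rfl | hab := eq_or_ne b a
    · simp [h]
    · rw [h, lp.single_apply_ne _ _ _ hab, lp.single_apply_ne _ _ _ (he.ne hab), map_zero]
  · rw [h₀ _ _ hb, lp.single_apply_ne]
    rintro rfl
    exact hb ⟨a, rfl⟩

protected theorem injective (hT : IsWeightedShift e C T) (he : Function.Injective e)
    (hC : ∀ a, Function.Injective (C a)) : Function.Injective T := fun x y hxy => by
  refine lp.ext <| funext fun a => hC a ?_
  rw [← hT.apply_apply he, ← hT.apply_apply he, hxy]

theorem matrixEntry_eq (hT : IsWeightedShift e C T) (i : β) (j : α) :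
    matrixEntry i j T = if i = e j then C j else 0 := by
  ext v
  rw [matrixEntry_apply, hT]
  split_ifs with h <;> simp [h]

theorem matrixEntry_comp (hT : IsWeightedShift e C T) (S : ℓ²(β, F) →L[𝕜] ℓ²(γ, G)) (i : γ)
    (j : α) : matrixEntry i j (S ∘L T) = matrixEntry i (e j) S ∘L C j := by
  ext v
  simp [hT j v]

theorem comp_matrixEntry (hT : IsWeightedShift e C T) (he : Function.Injective e) [DecidableEq γ]
    (S : ℓ²(γ, G) →L[𝕜] ℓ²(α, E)) (i : α) (j : γ) :
    matrixEntry (e i) j (T ∘L S) = C i ∘L matrixEntry i j S := by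
  ext v
  simp [hT.apply_apply he]

theorem comp_matrixEntry_of_notMem_range (hT : IsWeightedShift e C T) [DecidableEq γ]
    (S : ℓ²(γ, G) →L[𝕜] ℓ²(α, E)) {i : β} (hi : i ∉ Set.range e) (j : γ) :
    matrixEntry i j (T ∘L S) = 0 := by
  ext v
  simp [hT.apply_of_notMem_range _ hi]

end IsWeightedShift

theorem isWeightedShift_iff {e : α → β} {C : α → E →L[𝕜] F} {T : ℓ²(α, E) →L[𝕜] ℓ²(β, F)}
    (he : Function.Injective e) : IsWeightedShift e C T ↔
    (∀ x a, T x (e a) = C a (x a)) ∧ ∀ x, ∀ b ∉ Set.range e, T x b = 0 :=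
  ⟨fun hT => ⟨hT.apply_apply he, fun x _ hb => hT.apply_of_notMem_range x hb⟩,
    fun h => .of_apply he h.1 h.2⟩

end Entries

section HilbertEntries

variable {𝕜 α β γ E F G : Type*} [RCLike 𝕜] [DecidableEq α] [DecidableEq β]
  [NormedAddCommGroup E] [InnerProductSpace 𝕜 E]
  [NormedAddCommGroup F] [InnerProductSpace 𝕜 F]
  [NormedAddCommGroup G] [NormedSpace 𝕜 G] [CompleteSpace F]

theorem exists_isWeightedShift {e : α → β} (he : Function.Injective e) {C : α → E →L[𝕜] F} {c : ℝ}
    (hc : 0 ≤ c) (hC : ∀ a, ‖C a‖ ≤ c) :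
    ∃ T : ℓ²(α, E) →L[𝕜] ℓ²(β, F), IsWeightedShift e C T ∧ ‖T‖ ≤ c := by
  let V (a : α) : F →ₗᵢ[𝕜] ℓ²(β, F) :=
    { lp.lsingle (E := fun _ => F) 2 (e a) with
      norm_map' := lp.norm_single (E := fun _ => F) (by simp) (e a) }
  have hV : OrthogonalFamily 𝕜 (fun _ : α => F) V := fun a b hab v w => by
    change inner 𝕜 (lp.single 2 (e a) v) (lp.single 2 (e b) w : ℓ²(β, F)) = 0
    rw [lp.inner_single_left, lp.single_apply_ne _ _ _ (he.ne hab), inner_zero_right]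
  let D := lp.mapCLM 2 C hc hC
  refine ⟨hV.linearIsometry.toContinuousLinearMap ∘L D, fun a v => ?_, ?_⟩
  · have hD : D (lp.single 2 a v) = lp.single 2 a (C a v) := by
      ext b
      obtain rfl | hab := eq_or_ne b a
      · simp [D]
      · simp [D, hab]
    exact (congrArg hV.linearIsometry hD).trans (hV.linearIsometry_apply_single (C a v))
  · exact (opNorm_comp_le _ _).trans <| (mul_le_of_le_one_left (norm_nonneg _)
      (LinearIsometry.norm_toContinuousLinearMap_le _)).trans (lp.norm_mapCLM_le ..)

variable [CompleteSpace E]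

namespace IsWeightedShift

variable {e : α → β} {C : α → E →L[𝕜] F} {T : ℓ²(α, E) →L[𝕜] ℓ²(β, F)}

theorem adjoint_apply_apply (hT : IsWeightedShift e C T) (y : ℓ²(β, F)) (a : α) :
    adjoint T y a = adjoint (C a) (y (e a)) := by
  refine ext_inner_left 𝕜 fun v => ?_
  calc inner 𝕜 v (adjoint T y a) = inner 𝕜 (lp.single 2 a v) (adjoint T y) :=
        (lp.inner_single_left a v (adjoint T y)).symm
    _ = inner 𝕜 (C a v) (y (e a)) := by rw [adjoint_inner_right, hT, lp.inner_single_left]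
    _ = inner 𝕜 v (adjoint (C a) (y (e a))) := (adjoint_inner_right _ _ _).symm

theorem adjoint_comp_matrixEntry (hT : IsWeightedShift e C T) [DecidableEq γ]
    (S : ℓ²(γ, G) →L[𝕜] ℓ²(β, F)) (i : α) (j : γ) :
    matrixEntry i j (adjoint T ∘L S) = adjoint (C i) ∘L matrixEntry (e i) j S := by
  ext v
  simp [hT.adjoint_apply_apply]

theorem adjoint_comp_self (hT : IsWeightedShift e C T) (he : Function.Injective e) :
    IsWeightedShift id (fun a => adjoint (C a) ∘L C a) (adjoint T ∘L T) :=
  of_apply Function.injective_id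
    (fun x a => by simp [hT.adjoint_apply_apply, hT.apply_apply he])
    fun _ _ hb => (hb ⟨_, rfl⟩).elim

theorem isStarNormal {e : α ≃ α} {D : E →L[𝕜] E} [hD : IsStarNormal D]
    {T : ℓ²(α, E) →L[𝕜] ℓ²(α, E)} (hT : IsWeightedShift e (fun _ => D) T) : IsStarNormal T := by
  refine ⟨ContinuousLinearMap.ext fun x => lp.ext <| funext fun b => ?_⟩
  obtain ⟨a, rfl⟩ := e.surjective b
  calc adjoint T (T x) (e a) = adjoint D (D (x (e a))) := by
        rw [hT.adjoint_apply_apply, hT.apply_apply e.injective]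
    _ = D (adjoint D (x (e a))) := DFunLike.congr_fun hD.star_comm_self (x (e a))
    _ = T (adjoint T x) (e a) := by
        rw [hT.apply_apply e.injective, hT.adjoint_apply_apply]

end IsWeightedShift

end HilbertEntries

section Commutation

variable {𝓐 : Type*} [NonUnitalCStarAlgebra 𝓐]

-- This is the Fuglede–Putnam theorem for the normal elements `c • a` and `a`.
theorem star_mul_self_mul_eq_smul {a x : 𝓐} [IsStarNormal a] {c : ℂ}
    (h : a * x = c • (x * a)) : star a * a * x = ((‖c‖ ^ 2 : ℝ) : ℂ) • (x * (star a * a)) := by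
  have hsemi : SemiconjBy x (c • a) a := by rw [SemiconjBy, mul_smul_comm, h]
  have hnormal : IsStarNormal (c • a) := inferInstance
  have hstar : x * star (c • a) = star a * x := hsemi.star_right hnormal ‹_›
  rw [mul_assoc, h, mul_smul_comm, ← mul_assoc, ← hstar, star_smul, mul_smul_comm, smul_mul_assoc,
    smul_smul, mul_assoc, RCLike.star_def, RCLike.mul_conj]
  norm_cast

variable [PartialOrder 𝓐] [StarOrderedRing 𝓐]

theorem mul_eq_zero_of_mul_eq_neg_smul_mul {a d : 𝓐} {r : ℝ} (ha : 0 ≤ a) (hr : 0 < r)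
    (h : a * d = -(r • (d * a))) : d * a = 0 := by
  have hsa : star a = a := (IsSelfAdjoint.of_nonneg ha).star_eq
  have hpos : 0 ≤ star d * a * d := star_left_conjugate_nonneg ha d
  have hda : star d * a * d = -(r • (star d * d * a)) := by
    rw [mul_assoc, h, mul_neg, mul_smul_comm, mul_assoc]
  have hcomm : Commute (star d * d) a := by
    have := (IsSelfAdjoint.of_nonneg hpos).star_eq
    rw [hda] at this
    simp only [star_neg, star_smul, star_mul, star_star, hsa, star_trivial, neg_inj] at this
    exact (smul_right_injective 𝓐 hr.ne' this).symm
  have hzero : star d * d * a = 0 := by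
    refine le_antisymm ?_ (hcomm.mul_nonneg (star_mul_self_nonneg d) ha)
    rw [hda, ← smul_neg] at hpos
    exact neg_nonneg.1 ((smul_nonneg_iff_nonneg_of_pos_left hr).1 hpos)
  rw [← CStarRing.star_mul_self_eq_zero_iff, star_mul, mul_assoc, ← mul_assoc (star d), hzero,
    mul_zero]

theorem mul_eq_smul_mul_of_sq {a x : 𝓐} {r : ℝ} (ha : 0 ≤ a) (hr : 0 < r)
    (h : a * a * x = (r ^ 2) • (x * (a * a))) : a * x = r • (x * a) := by
  set d := a * x - r • (x * a) with hd
  have hsa : star a = a := (IsSelfAdjoint.of_nonneg ha).star_eq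
  have had_eq : a * d = -(r • (d * a)) := by
    simp only [hd, mul_sub, sub_mul, mul_smul_comm, smul_mul_assoc, smul_sub, smul_smul,
      ← mul_assoc]
    simp only [h, ← mul_assoc, sq]
    abel
  have hda : d * a = 0 := mul_eq_zero_of_mul_eq_neg_smul_mul ha hr had_eq
  have had : a * d = 0 := by rw [had_eq, hda, smul_zero, neg_zero]
  have hda_star : star d * a = 0 := by rw [← hsa, ← star_mul, had, star_zero]
  have had_star : a * star d = 0 := by rw [← hsa, ← star_mul, hda, star_zero]
  have hddd : star d * (d * star d) = 0 := by
    calc star d * (d * star d) = star d * a * x * star d - r • (star d * x * (a * star d)) := by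
          nth_rw 2 [hd]
          simp only [sub_mul, mul_sub, smul_mul_assoc, mul_smul_comm, mul_assoc]
      _ = 0 := by simp only [hda_star, had_star, zero_mul, mul_zero, smul_zero, sub_zero]
  have hdd : d * star d = 0 := by
    rw [← CStarRing.star_mul_self_eq_zero_iff, star_mul, star_star, mul_assoc, hddd, mul_zero]
  exact sub_eq_zero.1 ((CStarRing.mul_star_self_eq_zero_iff d).1 hdd)

end Commutation

section Fejer

variable {𝕜 α E : Type*} [RCLike 𝕜] [DecidableEq α]
  [NormedAddCommGroup E] [InnerProductSpace 𝕜 E]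

variable (𝕜 E) in
/-- The projection of `ℓ²(α, E)` onto the vectors supported in the finite set `s`. -/
noncomputable def coordProj (s : Finset α) : ℓ²(α, E) →L[𝕜] ℓ²(α, E) :=
  ∑ a ∈ s, lp.singleContinuousLinearMap 𝕜 (fun _ => E) 2 a ∘L lp.evalCLM 𝕜 (fun _ => E) 2 a

theorem coordProj_apply (s : Finset α) (x : ℓ²(α, E)) :
    coordProj 𝕜 E s x = ∑ a ∈ s, lp.single 2 a (x a) := by
  simp only [coordProj, sum_apply]
  rfl

theorem isWeightedShift_coordProj (s : Finset α) :
    IsWeightedShift id (fun a => if a ∈ s then 1 else 0) (coordProj 𝕜 E s) := by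
  intro a v
  rw [coordProj_apply]
  by_cases ha : a ∈ s
  · rw [Finset.sum_eq_single_of_mem a ha fun b _ hb => by
      rw [lp.single_apply_ne _ _ _ hb, lp.single_zero]]
    simp [ha]
  · rw [Finset.sum_eq_zero fun b hb => by
      rw [lp.single_apply_ne _ _ _ (ne_of_mem_of_not_mem hb ha), lp.single_zero]]
    simp [ha]

theorem norm_coordProj_apply_sq (s : Finset α) (x : ℓ²(α, E)) :
    ‖coordProj 𝕜 E s x‖ ^ 2 = ∑ a ∈ s, ‖x a‖ ^ 2 := by
  rw [coordProj_apply]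
  simpa using lp.norm_sum_single (p := 2) (by simp) (fun a => x a) s

/-- The block of the `N` sites ending at `m`, truncated at `0`. -/
def window (N m : ℕ) : Finset ℕ :=
  Finset.Ico (m + 1 - N) (m + 1)

theorem mem_window {N m i : ℕ} : i ∈ window N m ↔ i ≤ m ∧ m < i + N := by
  rw [window, Finset.mem_Ico]
  lia

variable (𝕜) in
theorem sum_norm_coordProj_window_sq_le (N K : ℕ) (x : ℓ²(ℕ, E)) :
    ∑ m ∈ Finset.range K, ‖coordProj 𝕜 E (window N m) x‖ ^ 2 ≤ N * ‖x‖ ^ 2 := by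
  calc ∑ m ∈ Finset.range K, ‖coordProj 𝕜 E (window N m) x‖ ^ 2
      = ∑ i ∈ Finset.range K, ∑ m ∈ Finset.range K with i ∈ window N m, ‖x i‖ ^ 2 := by
        simp only [norm_coordProj_apply_sq]
        refine Finset.sum_comm' fun m i => ?_
        simp only [Finset.mem_range, Finset.mem_filter, mem_window]
        lia
    _ ≤ ∑ i ∈ Finset.range K, N * ‖x i‖ ^ 2 := by
        gcongr with i
        rw [Finset.sum_const, nsmul_eq_mul]
        gcongr
        refine (Finset.card_le_card (t := Finset.Ico i (i + N)) fun m => ?_).trans (by simp)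
        simp only [Finset.mem_range, Finset.mem_filter, Finset.mem_Ico, mem_window]
        lia
    _ ≤ N * ‖x‖ ^ 2 := by
        rw [← Finset.mul_sum]
        gcongr
        simpa using lp.sum_rpow_le_norm_rpow (p := 2) (by simp) x (Finset.range K)

theorem card_filter_mem_window {i j K N : ℕ} (h : j + N ≤ K) :
    {m ∈ Finset.range K | i ∈ window N m ∧ j ∈ window N m}.card = N - Nat.dist i j := by
  trans (Finset.Ico (max i j) (min i j + N)).card
  · congr 1
    ext m
    simp only [Finset.mem_range, Finset.mem_Ico, Finset.mem_filter, mem_window]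
    lia
  · rw [Nat.card_Ico, Nat.dist]
    lia

variable [CompleteSpace E]

theorem matrixEntry_compression (X : ℓ²(α, E) →L[𝕜] ℓ²(α, E)) (s : Finset α) (i j : α) :
    matrixEntry i j (adjoint (coordProj 𝕜 E s) ∘L X ∘L coordProj 𝕜 E s) =
      if i ∈ s ∧ j ∈ s then matrixEntry i j X else 0 := by
  rw [(isWeightedShift_coordProj s).adjoint_comp_matrixEntry,
    (isWeightedShift_coordProj s).matrixEntry_comp]
  ext v
  split_ifs <;> simp_all [← star_eq_adjoint]

theorem norm_le_of_fejer {X S : ℓ²(ℕ, E) →L[𝕜] ℓ²(ℕ, E)} {N : ℕ} (hN : N ≠ 0)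
    (hS : ∀ i j, matrixEntry i j S = ((N - Nat.dist i j : ℕ) / N : 𝕜) • matrixEntry i j X) :
    ‖S‖ ≤ ‖X‖ := by
  let Q (m : ℕ) : ℓ²(ℕ, E) →L[𝕜] ℓ²(ℕ, E) := coordProj 𝕜 E (window N m)
  let R (K : ℕ) : ℓ²(ℕ, E) →L[𝕜] ℓ²(ℕ, E) :=
    ∑ m ∈ Finset.range K, adjoint (Q m) ∘L X ∘L Q m
  have hN' : (N : 𝕜) ≠ 0 := Nat.cast_ne_zero.2 hN
  have hR : ∀ K, ‖R K‖ ≤ N * ‖X‖ := fun K =>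
    norm_sum_adjoint_comp_comp_le X Q _ N.cast_nonneg (sum_norm_coordProj_window_sq_le 𝕜 N K)
  have hentry : ∀ i j K, j + N ≤ K → matrixEntry i j (R K) = matrixEntry i j ((N : 𝕜) • S) := by
    intro i j K hK
    simp only [R, Q, map_sum, map_smul, matrixEntry_compression, Finset.sum_ite,
      Finset.sum_const_zero, add_zero, Finset.sum_const]
    rw [card_filter_mem_window hK, hS, smul_smul, mul_div_cancel₀ _ hN', Nat.cast_smul_eq_nsmul]
  have hlim : ∀ x ∈ {x : ℓ²(ℕ, E) | ∃ j v, x = lp.single 2 j v},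
      Tendsto (fun K => R K x) atTop (𝓝 (((N : 𝕜) • S) x)) := by
    rintro _ ⟨j, v, rfl⟩
    refine tendsto_nhds_of_eventually_eq <| (eventually_ge_atTop (j + N)).mono fun K hK => ?_
    ext i
    exact DFunLike.congr_fun (hentry i j K hK) v
  have hle := (tendsto_of_dense_span hR (dense_span_single 𝕜 ℕ E) hlim).1
  rw [norm_smul, RCLike.norm_natCast] at hle
  exact le_of_mul_le_mul_left hle (by positivity)

end Fejer

section Toeplitz

theorem apply_add_natCast_eq_pow_smul {R ι M : Type*} [Monoid R] [MulAction R M]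
    [AddMonoidWithOne ι] {f : ι → ι → M} {ω : R} (h : ∀ i j, f (i + 1) (j + 1) = ω • f i j)
    (i j : ι) (n : ℕ) : f (i + n) (j + n) = ω ^ n • f i j := by
  induction n with
  | zero => simp
  | succ n ih => rw [Nat.cast_succ, ← add_assoc, ← add_assoc, h, ih, smul_smul, pow_succ']

variable {𝕜 E : Type*} [RCLike 𝕜] [NormedAddCommGroup E] [NormedSpace 𝕜 E]

/-- The bounded lower triangular operators on `ℓ²(ℕ, E)` whose matrix `(Tᵢⱼ)` is constant along
diagonals up to the twist `Tᵢ₊₁,ⱼ₊₁ = ω Tᵢⱼ`, and whose blocks satisfy `A Tᵢⱼ = r Tᵢⱼ A`. -/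
def twistedToeplitz (A : E →L[𝕜] E) (r ω : 𝕜) : Submodule 𝕜 (ℓ²(ℕ, E) →L[𝕜] ℓ²(ℕ, E)) where
  carrier := {T | (∀ i j, i < j → matrixEntry i j T = 0) ∧
    (∀ i j, matrixEntry (i + 1) (j + 1) T = ω • matrixEntry i j T) ∧
    ∀ i j, A ∘L matrixEntry i j T = r • (matrixEntry i j T ∘L A)}
  zero_mem' := by simp
  add_mem' := by
    rintro S T ⟨hS₁, hS₂, hS₃⟩ ⟨hT₁, hT₂, hT₃⟩
    refine ⟨fun i j hij => ?_, fun i j => ?_, fun i j => ?_⟩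
    · rw [map_add, hS₁ i j hij, hT₁ i j hij, add_zero]
    · rw [map_add, map_add, hS₂, hT₂, smul_add]
    · rw [map_add, comp_add, hS₃, hT₃, add_comp, smul_add]
  smul_mem' := by
    rintro c T ⟨hT₁, hT₂, hT₃⟩
    refine ⟨fun i j hij => ?_, fun i j => ?_, fun i j => ?_⟩
    · rw [map_smul, hT₁ i j hij, smul_zero]
    · rw [map_smul, map_smul, hT₂, smul_comm]
    · rw [map_smul, comp_smul, hT₃, smul_comp, smul_comm]

/-- The weighted shifts `x ↦ (0, …, 0, L x₀, ω L x₁, ω² L x₂, …)` with `A L = r L A`; each is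
supported on one diagonal of the operator matrix. -/
def diagonalGenerators (A : E →L[𝕜] E) (r ω : 𝕜) : Set (ℓ²(ℕ, E) →L[𝕜] ℓ²(ℕ, E)) :=
  {T | ∃ (n : ℕ) (L : E →L[𝕜] E), A ∘L L = r • (L ∘L A) ∧
    IsWeightedShift (· + n) (fun k => ω ^ k • L) T}

variable {A : E →L[𝕜] E} {r ω : 𝕜}

theorem diagonalGenerators_subset_twistedToeplitz :
    diagonalGenerators A r ω ⊆ twistedToeplitz A r ω := by
  rintro T ⟨n, L, hL, hT⟩
  refine ⟨fun i j hij => ?_, fun i j => ?_, fun i j => ?_⟩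
  · rw [hT.matrixEntry_eq, if_neg (by lia)]
  · simp only [hT.matrixEntry_eq, add_right_comm j 1 n, add_left_inj, pow_succ', smul_ite,
      smul_smul, smul_zero]
  · rw [hT.matrixEntry_eq]
    split_ifs
    · rw [comp_smul, hL, smul_comp, smul_comm]
    · simp

theorem continuous_dual_matrixEntry (f : StrongDual 𝕜 E) (i j : ℕ) (v : E) :
    Continuous fun T : ℓ²(ℕ, E) →WOT[𝕜] ℓ²(ℕ, E) => f (matrixEntry i j T.toCLM v) :=
  ContinuousLinearMapWOT.continuous_dual_apply (lp.single (E := fun _ => E) 2 j v)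
    (f ∘L lp.evalCLM 𝕜 (fun _ => E) 2 i)

theorem isClosed_ofCLM_image_twistedToeplitz : IsClosed (ContinuousLinearMapWOT.ofCLM ''
    (twistedToeplitz A r ω : Set (ℓ²(ℕ, E) →L[𝕜] ℓ²(ℕ, E)))) := by
  have hset : ContinuousLinearMapWOT.ofCLM '' (twistedToeplitz A r ω : Set _) =
      {T : ℓ²(ℕ, E) →WOT[𝕜] ℓ²(ℕ, E) | ∀ (f : StrongDual 𝕜 E) (v : E) (i j : ℕ),
        (i < j → f (matrixEntry i j T.toCLM v) = 0) ∧
        f (matrixEntry (i + 1) (j + 1) T.toCLM v) = ω * f (matrixEntry i j T.toCLM v) ∧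
        (f ∘L A) (matrixEntry i j T.toCLM v) = r * f (matrixEntry i j T.toCLM (A v))} := by
    ext T
    constructor
    · rintro ⟨X, ⟨h₁, h₂, h₃⟩, rfl⟩ f v i j
      refine ⟨fun hij => by simp [h₁ i j hij], ?_, ?_⟩
      · simp [h₂ i j]
      · simpa using congrArg f (DFunLike.congr_fun (h₃ i j) v)
    · refine fun h => ⟨T.toCLM, ⟨fun i j hij => ?_, fun i j => ?_, fun i j => ?_⟩, rfl⟩ <;>
        refine ContinuousLinearMap.ext fun v =>
          (SeparatingDual.eq_iff_forall_dual_eq (R := 𝕜)).2 fun f => ?_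
      · simpa using (h f v i j).1 hij
      · simpa using (h f v i j).2.1
      · simpa using (h f v i j).2.2
  rw [hset]
  simp only [Set.ofPred_forall, Set.ofPred_and]
  refine isClosed_iInter fun f => isClosed_iInter fun v => isClosed_iInter fun i =>
    isClosed_iInter fun j => .inter (isClosed_iInter fun _ => ?_) (.inter ?_ ?_)
  · exact isClosed_eq (continuous_dual_matrixEntry f i j v) continuous_const
  · exact isClosed_eq (continuous_dual_matrixEntry f _ _ v)
      ((continuous_dual_matrixEntry f i j v).const_mul ω)
  · exact isClosed_eq (continuous_dual_matrixEntry (f ∘L A) i j v)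
      ((continuous_dual_matrixEntry f i j (A v)).const_mul r)

end Toeplitz

section Cesaro

theorem tendsto_natCast_sub_div_atTop (𝕜 : Type*) [RCLike 𝕜] (d : ℕ) :
    Tendsto (fun N : ℕ => ((N - d : ℕ) / N : 𝕜)) atTop (𝓝 1) := by
  have hlim : Tendsto (fun N : ℕ => 1 - (d : 𝕜) / N) atTop (𝓝 1) := by
    simpa using tendsto_const_nhds.sub (tendsto_const_div_atTop_nhds_zero_nat (d : 𝕜))
  refine hlim.congr' ?_
  filter_upwards [eventually_ge_atTop d, eventually_ne_atTop 0] with N hd hN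
  rw [Nat.cast_sub hd, sub_div, div_self (Nat.cast_ne_zero.2 hN)]

variable {𝕜 E : Type*} [RCLike 𝕜] [NormedAddCommGroup E] [InnerProductSpace 𝕜 E] [CompleteSpace E]
  {A : E →L[𝕜] E} {r ω : 𝕜}

theorem exists_mem_diagonalGenerators {X : ℓ²(ℕ, E) →L[𝕜] ℓ²(ℕ, E)} (hω : ‖ω‖ = 1)
    (hX : X ∈ twistedToeplitz A r ω) (n : ℕ) :
    ∃ T ∈ diagonalGenerators A r ω,
      ∀ i j, matrixEntry i j T = if i = j + n then matrixEntry i j X else 0 := by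
  obtain ⟨T, hT, -⟩ := exists_isWeightedShift (add_left_injective n)
    (C := fun k => ω ^ k • matrixEntry n 0 X) (norm_nonneg (matrixEntry n 0 X))
    fun k => by rw [norm_smul, norm_pow, hω, one_pow, one_mul]
  refine ⟨T, ⟨n, _, hX.2.2 n 0, hT⟩, fun i j => ?_⟩
  rw [hT.matrixEntry_eq]
  refine ite_congr rfl (fun hij => ?_) fun _ => rfl
  have hdiag := apply_add_natCast_eq_pow_smul (f := fun i j => matrixEntry i j X) hX.2.1 n 0 j
  simpa [hij, add_comm j n] using hdiag.symm

theorem exists_fejer_mean_mem_span {X : ℓ²(ℕ, E) →L[𝕜] ℓ²(ℕ, E)} (hω : ‖ω‖ = 1)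
    (hX : X ∈ twistedToeplitz A r ω) (N : ℕ) :
    ∃ S ∈ Submodule.span 𝕜 (diagonalGenerators A r ω), ∀ i j,
      matrixEntry i j S = ((N - Nat.dist i j : ℕ) / N : 𝕜) • matrixEntry i j X := by
  choose T hT hTX using exists_mem_diagonalGenerators hω hX
  refine ⟨∑ n ∈ Finset.range N, ((N - n : ℕ) / N : 𝕜) • T n,
    Submodule.sum_smul_mem _ _ fun n _ => Submodule.subset_span (hT n), fun i j => ?_⟩
  simp only [map_sum, map_smul, hTX]
  obtain hij | ⟨k, rfl⟩ := (lt_or_ge i j).imp_right Nat.exists_eq_add_of_le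
  · simp [hX.1 i j hij]
  · rw [Nat.dist_eq_sub_of_le_right (Nat.le_add_right j k), Nat.add_sub_cancel_left]
    simp +contextual [Finset.sum_ite_eq, Nat.sub_eq_zero_of_le]

theorem closure_ofCLM_image_span_diagonalGenerators (hω : ‖ω‖ = 1) :
    closure (ContinuousLinearMapWOT.ofCLM ''
      (Submodule.span 𝕜 (diagonalGenerators A r ω) : Set (ℓ²(ℕ, E) →L[𝕜] ℓ²(ℕ, E)))) =
    ContinuousLinearMapWOT.ofCLM '' twistedToeplitz A r ω := by
  refine (closure_minimal (Set.image_mono ?_) isClosed_ofCLM_image_twistedToeplitz).antisymm ?_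
  · exact Submodule.span_le.2 diagonalGenerators_subset_twistedToeplitz
  rintro _ ⟨X, hX, rfl⟩
  choose S hS hSX using fun N => exists_fejer_mean_mem_span hω hX (N + 1)
  refine mem_closure_of_tendsto (b := atTop) (f := fun N => .ofCLM (S N)) ?_ <|
    .of_forall fun N => Set.mem_image_of_mem _ (hS N)
  refine tendsto_ofCLM_of_dense_span (fun N => norm_le_of_fejer N.succ_ne_zero (hSX N))
    (dense_span_single 𝕜 ℕ E) (dense_span_single 𝕜 ℕ E) ?_
  rintro _ ⟨j, v, rfl⟩ _ ⟨i, w, rfl⟩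
  simp only [lp.inner_single_right, ← matrixEntry_apply, hSX]
  have hcoeff := (tendsto_natCast_sub_div_atTop 𝕜 (Nat.dist i j)).comp
    (tendsto_add_atTop_nat 1)
  simpa using (hcoeff.smul_const (matrixEntry i j X v)).inner tendsto_const_nhds

end Cesaro

section EventuallyConstant

variable {𝕜 α β E F : Type*} [RCLike 𝕜] [DecidableEq α] [NormedAddCommGroup E]
  [NormedSpace 𝕜 E] [NormedAddCommGroup F] [NormedSpace 𝕜 F] [CompleteSpace F]

theorem exists_matrixEntry_eq_of_eventually_const {S : ℕ → ℓ²(α, E) →L[𝕜] ℓ²(β, F)} {C : ℝ}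
    {φ : α → ℕ} (hS : ∀ m, ‖S m‖ ≤ C)
    (h : ∀ j m, φ j ≤ m → ∀ i, matrixEntry i j (S (m + 1)) = matrixEntry i j (S m)) :
    ∃ Z : ℓ²(α, E) →L[𝕜] ℓ²(β, F),
      ∀ i j m, φ j ≤ m → matrixEntry i j Z = matrixEntry i j (S m) := by
  have hlim : ∀ j v m, φ j ≤ m →
      Tendsto (fun k => S k (lp.single 2 j v)) atTop (𝓝 (S m (lp.single 2 j v))) := by
    refine fun j v m hm => tendsto_atTop_of_eventually_const (i₀ := m) fun k hk => ?_
    induction k, hk using Nat.le_induction with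
    | base => rfl
    | succ k hk ih =>
      rw [← ih]
      ext i
      exact DFunLike.congr_fun (h j k (hm.trans hk) i) v
  obtain ⟨Z, -, hZ⟩ := exists_tendsto_of_dense_span hS (dense_span_single 𝕜 α E) <| by
    rintro _ ⟨j, v, rfl⟩
    exact ⟨_, hlim j v (φ j) le_rfl⟩
  refine ⟨Z, fun i j m hm => ?_⟩
  ext v
  exact congrArg (fun x : ℓ²(β, F) => x i)
    (tendsto_nhds_unique (hZ (lp.single 2 j v)) (hlim j v m hm))

end EventuallyConstant

section Extension

variable {𝕜 E F : Type*} [RCLike 𝕜] [NormedAddCommGroup E] [InnerProductSpace 𝕜 E]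
  [NormedAddCommGroup F] [InnerProductSpace 𝕜 F] [CompleteSpace E] [CompleteSpace F]

theorem exists_matrixEntry_translate (Y : ℓ²(ℤ, E) →L[𝕜] ℓ²(ℤ, F)) (m : ℤ) :
    ∃ T : ℓ²(ℤ, E) →L[𝕜] ℓ²(ℤ, F), ‖T‖ ≤ ‖Y‖ ∧
      ∀ i j, matrixEntry i j T = matrixEntry (i + m) (j + m) Y := by
  obtain ⟨V, hV, hV_norm⟩ := exists_isWeightedShift (add_left_injective m)
    (C := fun _ => (1 : E →L[𝕜] E)) zero_le_one fun _ => norm_id_le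
  obtain ⟨W, hW, hW_norm⟩ := exists_isWeightedShift (add_left_injective m)
    (C := fun _ => (1 : F →L[𝕜] F)) zero_le_one fun _ => norm_id_le
  refine ⟨adjoint W ∘L Y ∘L V, ?_, fun i j => ?_⟩
  · calc ‖adjoint W ∘L Y ∘L V‖ ≤ ‖adjoint W‖ * (‖Y‖ * ‖V‖) :=
          (opNorm_comp_le _ _).trans (by gcongr; exact opNorm_comp_le _ _)
      _ ≤ 1 * (‖Y‖ * 1) := by
          rw [LinearIsometryEquiv.norm_map]
          gcongr
      _ = ‖Y‖ := by rw [one_mul, mul_one]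
  · rw [hW.adjoint_comp_matrixEntry, hV.matrixEntry_comp, ← star_eq_adjoint, star_one]
    rfl

-- The extension is the strong limit of the translates of `Y` by `m`, rescaled by `ω⁻ᵐ`.
theorem exists_twist_invariant_extension {Y : ℓ²(ℤ, E) →L[𝕜] ℓ²(ℤ, F)} {ω : 𝕜} (hω : ‖ω‖ = 1)
    (hY : ∀ i j : ℤ, 0 ≤ j → matrixEntry (i + 1) (j + 1) Y = ω • matrixEntry i j Y) :
    ∃ Z : ℓ²(ℤ, E) →L[𝕜] ℓ²(ℤ, F),
      (∀ i j, matrixEntry (i + 1) (j + 1) Z = ω • matrixEntry i j Z) ∧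
      ∀ i j, 0 ≤ j → matrixEntry i j Z = matrixEntry i j Y := by
  have hω₀ : ω ≠ 0 := norm_ne_zero_iff.1 (hω ▸ one_ne_zero)
  choose T hT_norm hT using exists_matrixEntry_translate Y
  let S (m : ℕ) : ℓ²(ℤ, E) →L[𝕜] ℓ²(ℤ, F) := (ω ^ m)⁻¹ • T m
  have hS : ∀ i j (m : ℕ), matrixEntry i j (S m) = (ω ^ m)⁻¹ • matrixEntry (i + m) (j + m) Y :=
    fun i j m => by rw [map_smul, hT]
  have hS_norm : ∀ m, ‖S m‖ ≤ ‖Y‖ := fun m => by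
    rw [norm_smul, norm_inv, norm_pow, hω, one_pow, inv_one, one_mul]
    exact hT_norm m
  have hS_succ : ∀ j m, (-j).toNat ≤ m → ∀ i,
      matrixEntry i j (S (m + 1)) = matrixEntry i j (S m) := by
    intro j m hm i
    rw [hS, hS, Nat.cast_succ, ← add_assoc, ← add_assoc, hY _ _ (by lia), smul_smul, pow_succ,
      mul_inv, inv_mul_cancel_right₀ hω₀]
  obtain ⟨Z, hZ⟩ := exists_matrixEntry_eq_of_eventually_const hS_norm hS_succ
  refine ⟨Z, fun i j => ?_, fun i j hj => by simpa [hS] using hZ i j 0 (by lia)⟩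
  rw [hZ i j (-j).toNat le_rfl, hZ (i + 1) (j + 1) (-j).toNat (by lia), hS, hS, add_right_comm i,
    add_right_comm j, hY _ _ (by lia), smul_comm]

end Extension

section Lift

namespace IsWeightedShift

variable {𝕜 α β E : Type*} [RCLike 𝕜] [DecidableEq α] [DecidableEq β]
  [NormedAddCommGroup E] [NormedSpace 𝕜 E] {e : α → β} {J : ℓ²(α, E) →L[𝕜] ℓ²(β, E)}
  {Z : ℓ²(β, E) →L[𝕜] ℓ²(β, E)} {X : ℓ²(α, E) →L[𝕜] ℓ²(α, E)}

theorem comp_eq_comp_iff (hJ : IsWeightedShift e (fun _ => 1) J) (he : Function.Injective e) :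
    Z ∘L J = J ∘L X ↔ (∀ i j, matrixEntry (e i) (e j) Z = matrixEntry i j X) ∧
      ∀ b ∉ Set.range e, ∀ j, matrixEntry b (e j) Z = 0 := by
  have hcol : ∀ b j, matrixEntry b j (Z ∘L J) = matrixEntry b (e j) Z := fun b j =>
    hJ.matrixEntry_comp Z b j
  constructor
  · intro h
    refine ⟨fun i j => ?_, fun b hb j => ?_⟩
    · rw [← hcol, h, hJ.comp_matrixEntry he]
      rfl
    · rw [← hcol, h, hJ.comp_matrixEntry_of_notMem_range X hb]
  · rintro ⟨hrange, hzero⟩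
    refine ext_matrixEntry fun b j => ?_
    rw [hcol]
    by_cases hb : b ∈ Set.range e
    · obtain ⟨i, rfl⟩ := hb
      rw [hrange, hJ.comp_matrixEntry he]
      rfl
    · rw [hzero b hb, hJ.comp_matrixEntry_of_notMem_range X hb]

end IsWeightedShift

variable {𝕜 E : Type*} [RCLike 𝕜] [NormedAddCommGroup E] [InnerProductSpace 𝕜 E]

theorem IsWeightedShift.exists_comp_eq_comp {α β : Type*} [DecidableEq α] [DecidableEq β]
    [CompleteSpace E] {e : α → β} {J : ℓ²(α, E) →L[𝕜] ℓ²(β, E)}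
    (hJ : IsWeightedShift e (fun _ => 1) J) (he : Function.Injective e)
    (X : ℓ²(α, E) →L[𝕜] ℓ²(α, E)) : ∃ Y : ℓ²(β, E) →L[𝕜] ℓ²(β, E), Y ∘L J = J ∘L X := by
  refine ⟨J ∘L X ∘L adjoint J, ?_⟩
  have hJJ : adjoint J ∘L J = 1 := by
    ext x a
    simp [hJ.adjoint_apply_apply, hJ.apply_apply he, ← star_eq_adjoint]
  rw [comp_assoc, comp_assoc, hJJ]
  rfl

variable {A : E →L[𝕜] E} {r ω : 𝕜} {J : ℓ²(ℕ, E) →L[𝕜] ℓ²(ℤ, E)} {X : ℓ²(ℕ, E) →L[𝕜] ℓ²(ℕ, E)}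

theorem mem_twistedToeplitz_of_comp_eq_comp {Z : ℓ²(ℤ, E) →L[𝕜] ℓ²(ℤ, E)}
    (hJ : IsWeightedShift Nat.cast (fun _ => 1) J) (hZ : Z ∘L J = J ∘L X)
    (hshift : ∀ i j, matrixEntry (i + 1) (j + 1) Z = ω • matrixEntry i j Z)
    (hA : ∀ i j, A ∘L matrixEntry i j Z = r • (matrixEntry i j Z ∘L A)) :
    X ∈ twistedToeplitz A r ω := by
  obtain ⟨hX, hzero⟩ := (hJ.comp_eq_comp_iff Nat.cast_injective).1 hZ
  refine ⟨fun i j hij => ?_, fun i j => ?_, fun i j => ?_⟩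
  · have hneg : matrixEntry (-1 : ℤ) ((j - (i + 1) : ℕ) : ℤ) Z = 0 := hzero _ (by simp) _
    have hdiag := apply_add_natCast_eq_pow_smul (f := fun i j => matrixEntry i j Z) hshift
      (-1) ((j - (i + 1) : ℕ) : ℤ) (i + 1)
    rw [hneg, smul_zero] at hdiag
    rw [← hX, ← hdiag]
    congr 3 <;> lia
  · rw [← hX, ← hX, ← hshift]
    norm_cast
  · rw [← hX]
    exact hA i j

theorem matrixEntry_of_mem_twistedToeplitz_of_comp_eq_comp {Y : ℓ²(ℤ, E) →L[𝕜] ℓ²(ℤ, E)}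
    (hJ : IsWeightedShift Nat.cast (fun _ => 1) J) (hY : Y ∘L J = J ∘L X)
    (hX : X ∈ twistedToeplitz A r ω) {i j : ℤ} (hj : 0 ≤ j) :
    matrixEntry (i + 1) (j + 1) Y = ω • matrixEntry i j Y ∧
      A ∘L matrixEntry i j Y = r • (matrixEntry i j Y ∘L A) := by
  obtain ⟨hYX, hzero⟩ := (hJ.comp_eq_comp_iff Nat.cast_injective).1 hY
  have hneg : ∀ i < 0, ∀ k : ℕ, matrixEntry (i : ℤ) (k : ℤ) Y = 0 := fun i hi =>
    hzero i (by simpa using hi)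
  lift j to ℕ using hj
  obtain ⟨i, rfl⟩ | hi := (le_or_gt 0 i).imp_left Int.eq_ofNat_of_zero_le
  · rw [hYX, ← hX.2.1, ← hYX]
    exact ⟨by norm_cast, hX.2.2 i j⟩
  · rw [hneg i hi j]
    refine ⟨?_, by simp⟩
    rw [smul_zero]
    obtain hi | hi := (Int.add_one_le_of_lt hi).lt_or_eq
    · exact_mod_cast hneg _ hi (j + 1)
    · rw [hi]
      exact_mod_cast (hYX 0 (j + 1)).trans (hX.1 _ _ j.succ_pos)

variable [CompleteSpace E]

theorem exists_comp_eq_comp_of_mem_twistedToeplitz (hω : ‖ω‖ = 1)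
    (hJ : IsWeightedShift Nat.cast (fun _ => 1) J) (hX : X ∈ twistedToeplitz A r ω) :
    ∃ Z : ℓ²(ℤ, E) →L[𝕜] ℓ²(ℤ, E), Z ∘L J = J ∘L X ∧
      (∀ i j, matrixEntry (i + 1) (j + 1) Z = ω • matrixEntry i j Z) ∧
      ∀ i j, A ∘L matrixEntry i j Z = r • (matrixEntry i j Z ∘L A) := by
  obtain ⟨Y, hY⟩ := hJ.exists_comp_eq_comp Nat.cast_injective X
  have hY_entry {i j : ℤ} (hj : 0 ≤ j) :=
    matrixEntry_of_mem_twistedToeplitz_of_comp_eq_comp hJ hY hX (i := i) hj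
  obtain ⟨Z, hZ_shift, hZY⟩ :=
    exists_twist_invariant_extension hω fun i j hj => (hY_entry (i := i) hj).1
  obtain ⟨hYX, hY₀⟩ := (hJ.comp_eq_comp_iff Nat.cast_injective).1 hY
  have hZX : Z ∘L J = J ∘L X := (hJ.comp_eq_comp_iff Nat.cast_injective).2
    ⟨fun i j => (hZY i j (by simp)).trans (hYX i j),
      fun b hb j => (hZY b j (by simp)).trans (hY₀ b hb j)⟩
  refine ⟨Z, hZX, hZ_shift, fun i j => ?_⟩
  have hωn : ω ^ (-j).toNat ≠ 0 := pow_ne_zero _ (norm_ne_zero_iff.1 (hω ▸ one_ne_zero))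
  have hdiag := apply_add_natCast_eq_pow_smul (f := fun i j => matrixEntry i j Z) hZ_shift i j
    (-j).toNat
  have hA := (hY_entry (i := i + (-j).toNat) (j := j + (-j).toNat) (by lia)).2
  rw [← hZY _ _ (by lia), hdiag, comp_smul, smul_comp, smul_comm r] at hA
  exact smul_right_injective _ hωn hA

end Lift

section Intertwining

variable {α E : Type*} [DecidableEq α] [NormedAddCommGroup E] [InnerProductSpace ℂ E]
  [CompleteSpace E] {A B : E →L[ℂ] E} {e : α ≃ α} {N Z : ℓ²(α, E) →L[ℂ] ℓ²(α, E)} {l : ℂ}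

theorem comp_eq_smul_comp_of_shift_comp_eq_smul (hA : A.IsPositive)
    (hN : IsWeightedShift e (fun _ => A) N) (hl : l ≠ 0) (h : N ∘L Z = l • (Z ∘L N)) (i j : α) :
    A ∘L matrixEntry i j Z = (‖l‖ : ℂ) • (matrixEntry i j Z ∘L A) := by
  have hAnormal : IsStarNormal A := hA.isSelfAdjoint.isStarNormal
  have hNnormal : IsStarNormal N := hN.isStarNormal
  have hNN := hN.adjoint_comp_self e.injective
  rw [hA.isSelfAdjoint.adjoint_eq] at hNN
  have hsq : (adjoint N ∘L N) ∘L Z = ((‖l‖ ^ 2 : ℝ) : ℂ) • (Z ∘L (adjoint N ∘L N)) :=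
    star_mul_self_mul_eq_smul (a := N) (x := Z) h
  have hentry : A * A * matrixEntry i j Z = (‖l‖ ^ 2) • (matrixEntry i j Z * (A * A)) := by
    calc A * A * matrixEntry i j Z = matrixEntry i j ((adjoint N ∘L N) ∘L Z) :=
          (hNN.comp_matrixEntry Function.injective_id Z i j).symm
      _ = ((‖l‖ ^ 2 : ℝ) : ℂ) • (matrixEntry i j Z * (A * A)) := by
          rw [hsq, map_smul, hNN.matrixEntry_comp]
          rfl
      _ = (‖l‖ ^ 2) • (matrixEntry i j Z * (A * A)) := Complex.coe_smul _ _
  rw [Complex.coe_smul]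
  exact mul_eq_smul_mul_of_sq ((nonneg_iff_isPositive A).2 hA) (norm_pos_iff.2 hl) hentry

theorem shift_comp_eq_smul_comp_iff (hA : A.IsPositive) (hAB : A ∘L B = 1)
    (hN : IsWeightedShift e (fun _ => A) N) (hl : l ≠ 0) :
    N ∘L Z = l • (Z ∘L N) ↔
      (∀ i j, matrixEntry (e i) (e j) Z = (‖l‖ / l : ℂ) • matrixEntry i j Z) ∧
      ∀ i j, A ∘L matrixEntry i j Z = (‖l‖ : ℂ) • (matrixEntry i j Z ∘L A) := by
  have hentry : ∀ i j, matrixEntry (e i) j (N ∘L Z) = A ∘L matrixEntry i j Z := fun i j =>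
    hN.comp_matrixEntry e.injective Z i j
  constructor
  · intro h
    have hA_comm := comp_eq_smul_comp_of_shift_comp_eq_smul hA hN hl h
    refine ⟨fun i j => ?_, hA_comm⟩
    have hcomp : l • (matrixEntry (e i) (e j) Z ∘L A) = (‖l‖ : ℂ) • (matrixEntry i j Z ∘L A) := by
      rw [← hN.matrixEntry_comp, ← map_smul, ← h, hentry, hA_comm]
    have hcancel := congrArg (· ∘L B) hcomp
    simp only [smul_comp, comp_assoc, hAB] at hcancel
    rw [div_eq_inv_mul, mul_smul, eq_inv_smul_iff₀ hl]
    exact hcancel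
  · rintro ⟨hshift, hA_comm⟩
    refine ext_matrixEntry fun i j => ?_
    obtain ⟨i, rfl⟩ := e.surjective i
    rw [hentry, hA_comm, map_smul, hN.matrixEntry_comp, hshift, smul_comp, smul_smul,
      mul_div_cancel₀ _ hl]

end Intertwining

section Generators

variable {E : Type*} [NormedAddCommGroup E] [NormedSpace ℂ E] {A B : E →L[ℂ] E} {l : ℂ}

theorem zpow_neg_smul_pow_apply_pow_apply {L : E →L[ℂ] E} (hAB : A ∘L B = 1)
    (hL : A ∘L L = (‖l‖ : ℂ) • (L ∘L A)) (k : ℕ) (v : E) :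
    l ^ (-(k : ℤ)) • (A ^ k) (L ((B ^ k) v)) = (‖l‖ / l : ℂ) ^ k • L v := by
  have hsemi : SemiconjBy L ((‖l‖ : ℂ) • A) A := by rw [SemiconjBy, mul_smul_comm]; exact hL.symm
  have hpow : (A ^ k) ∘L L = (‖l‖ : ℂ) ^ k • (L ∘L (A ^ k)) := by
    have := (hsemi.pow_right k).eq
    rw [smul_pow, mul_smul_comm] at this
    exact this.symm
  have hAkBk : (A ^ k) ((B ^ k) v) = v := DFunLike.congr_fun (pow_mul_pow_eq_one k hAB) v
  calc l ^ (-(k : ℤ)) • (A ^ k) (L ((B ^ k) v))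
      = l ^ (-(k : ℤ)) • (‖l‖ : ℂ) ^ k • L ((A ^ k) ((B ^ k) v)) :=
        congrArg (l ^ (-(k : ℤ)) • ·) (DFunLike.congr_fun hpow ((B ^ k) v))
    _ = (‖l‖ / l : ℂ) ^ k • L v := by
        rw [hAkBk, smul_smul, zpow_neg, zpow_natCast, div_pow, div_eq_inv_mul]

theorem setOf_apply_eq_diagonalGenerators (hAB : A ∘L B = 1) :
    {T : ℓ²(ℕ, E) →L[ℂ] ℓ²(ℕ, E) | ∃ (n : ℕ) (L : E →L[ℂ] E), A ∘L L = (‖l‖ : ℂ) • (L ∘L A) ∧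
      ∀ x, (∀ j, j < n → T x j = 0) ∧
        ∀ k : ℕ, T x (k + n) = l ^ (-(k : ℤ)) • (A ^ k) (L ((B ^ k) (x k)))} =
      diagonalGenerators A (‖l‖ : ℂ) (‖l‖ / l) := by
  ext T
  refine exists_congr fun n => exists_congr fun L => and_congr_right fun hL => ?_
  have hrange : ∀ j, j ∉ Set.range (· + n) ↔ j < n := fun j => by
    rw [← not_le, le_iff_exists_add', Set.mem_range]
    simp only [eq_comm]
  simp only [isWeightedShift_iff (add_left_injective n), hrange, forall_and,
    zpow_neg_smul_pow_apply_pow_apply hAB hL, smul_apply]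
  exact and_comm

end Generators

theorem ne_zero_of_mem_extSpectrum {H : Type*} [NormedAddCommGroup H] [InnerProductSpace ℂ H]
    {T : H →L[ℂ] H} (hT : Function.Injective T) {l : ℂ} (hl : l ∈ extSpectrum T) : l ≠ 0 := by
  rintro rfl
  obtain ⟨X, hX, h⟩ := hl
  refine hX (ContinuousLinearMap.ext fun x => hT ?_)
  simpa using DFunLike.congr_fun h x

theorem isWeightedShift_addRight_one {E : Type*} [NormedAddCommGroup E] [NormedSpace ℂ E]
    {A : E →L[ℂ] E} {N : ℓ²(ℤ, E) →L[ℂ] ℓ²(ℤ, E)} (hN : ∀ x n, N x n = A (x (n - 1))) :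
    IsWeightedShift (Equiv.addRight (1 : ℤ)) (fun _ => A) N :=
  (isWeightedShift_iff (Equiv.injective _)).2
    ⟨fun x n => by simp [hN], fun _ m hm => (hm (Equiv.surjective _ m)).elim⟩

theorem lifting_extended_eigenvector_iff_weakStar_closure_general
    {𝔏 : Type*} [NormedAddCommGroup 𝔏] [InnerProductSpace ℂ 𝔏] [CompleteSpace 𝔏]
    (A : 𝔏 →L[ℂ] 𝔏) (hApos : A.IsPositive)
    (B : 𝔏 →L[ℂ] 𝔏) (hAB : A ∘L B = 1)
    (ι : lp (fun _ : ℕ => 𝔏) 2 →ₗᵢ[ℂ] lp (fun _ : ℤ => 𝔏) 2)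
    (hι₁ : ∀ (x : lp (fun _ : ℕ => 𝔏) 2) (n : ℕ), (ι x) (n : ℤ) = x n)
    (hι₂ : ∀ (x : lp (fun _ : ℕ => 𝔏) 2) (m : ℤ), m < 0 → (ι x) m = 0)
    (AU : lp (fun _ : ℤ => 𝔏) 2 →L[ℂ] lp (fun _ : ℤ => 𝔏) 2)
    (hAU : ∀ (x : lp (fun _ : ℤ => 𝔏) 2) (n : ℤ), (AU x) n = A (x (n - 1)))
    (l : ℂ) (hl : l ≠ 0)
    (X : lp (fun _ : ℕ => 𝔏) 2 →L[ℂ] lp (fun _ : ℕ => 𝔏) 2) :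
    (∃ Xhat : lp (fun _ : ℤ => 𝔏) 2 →L[ℂ] lp (fun _ : ℤ => 𝔏) 2,
        (∀ v, Xhat (ι v) = ι (X v)) ∧ AU ∘L Xhat = l • (Xhat ∘L AU)) ↔
      X ∈ ⇑(ContinuousLinearMapWOT.linearEquiv (σ := RingHom.id ℂ)
          (E := lp (fun _ : ℕ => 𝔏) 2) (F := lp (fun _ : ℕ => 𝔏) 2) ℂ).symm ⁻¹'
        closure (⇑(ContinuousLinearMapWOT.linearEquiv (σ := RingHom.id ℂ)
          (E := lp (fun _ : ℕ => 𝔏) 2) (F := lp (fun _ : ℕ => 𝔏) 2) ℂ).symm ''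
          (Submodule.span ℂ
            {X0 : lp (fun _ : ℕ => 𝔏) 2 →L[ℂ] lp (fun _ : ℕ => 𝔏) 2 |
              ∃ (n : ℕ) (L : 𝔏 →L[ℂ] 𝔏), A ∘L L = (‖l‖ : ℂ) • (L ∘L A) ∧
                ∀ x : lp (fun _ : ℕ => 𝔏) 2,
                  (∀ j : ℕ, j < n → (X0 x) j = 0) ∧
                  ∀ k : ℕ, (X0 x) (k + n) =
                    l ^ (-(k : ℤ)) • (A ^ k) (L ((B ^ k) (x k)))} : Set _)) := by
  have hω : ‖(‖l‖ / l : ℂ)‖ = 1 := by simp [hl]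
  have hι : IsWeightedShift Nat.cast (fun _ => 1) ι.toContinuousLinearMap :=
    (isWeightedShift_iff Nat.cast_injective).2 ⟨hι₁, fun x m hm => hι₂ x m (by simpa using hm)⟩
  have hN := isWeightedShift_addRight_one hAU
  trans X ∈ twistedToeplitz A (‖l‖ : ℂ) (‖l‖ / l)
  · constructor
    · rintro ⟨Z, hZ, hNZ⟩
      obtain ⟨hshift, hA⟩ := (shift_comp_eq_smul_comp_iff hApos hAB hN hl).1 hNZ
      exact mem_twistedToeplitz_of_comp_eq_comp hι (ContinuousLinearMap.ext hZ) hshift hA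
    · intro hX
      obtain ⟨Z, hZ, h⟩ := exists_comp_eq_comp_of_mem_twistedToeplitz hω hι hX
      exact ⟨Z, DFunLike.congr_fun hZ, (shift_comp_eq_smul_comp_iff hApos hAB hN hl).2 h⟩
  · rw [setOf_apply_eq_diagonalGenerators hAB]
    change _ ↔ .ofCLM X ∈ closure (ContinuousLinearMapWOT.ofCLM '' _)
    rw [closure_ofCLM_image_span_diagonalGenerators hω,
      ContinuousLinearMapWOT.ofCLM_injective.mem_set_image]
    rfl

theorem lifting_extended_eigenvector_iff_weakStar_closure
    {𝔏 : Type*} [NormedAddCommGroup 𝔏] [InnerProductSpace ℂ 𝔏] [CompleteSpace 𝔏]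
    (A : 𝔏 →L[ℂ] 𝔏) (hApos : A.IsPositive)
    (B : 𝔏 →L[ℂ] 𝔏) (hAB : A ∘L B = 1) (hBA : B ∘L A = 1)
    (ι : lp (fun _ : ℕ => 𝔏) 2 →ₗᵢ[ℂ] lp (fun _ : ℤ => 𝔏) 2)
    (hι₁ : ∀ (x : lp (fun _ : ℕ => 𝔏) 2) (n : ℕ), (ι x) (n : ℤ) = x n)
    (hι₂ : ∀ (x : lp (fun _ : ℕ => 𝔏) 2) (m : ℤ), m < 0 → (ι x) m = 0)
    (AU : lp (fun _ : ℤ => 𝔏) 2 →L[ℂ] lp (fun _ : ℤ => 𝔏) 2)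
    (hAU : ∀ (x : lp (fun _ : ℤ => 𝔏) 2) (n : ℤ), (AU x) n = A (x (n - 1)))
    (l : ℂ) (hl : l ∈ extSpectrum AU)
    (X : lp (fun _ : ℕ => 𝔏) 2 →L[ℂ] lp (fun _ : ℕ => 𝔏) 2) :
    (∃ Xhat : lp (fun _ : ℤ => 𝔏) 2 →L[ℂ] lp (fun _ : ℤ => 𝔏) 2,
        (∀ v, Xhat (ι v) = ι (X v)) ∧ AU ∘L Xhat = l • (Xhat ∘L AU)) ↔
      X ∈ ⇑(ContinuousLinearMapWOT.linearEquiv (σ := RingHom.id ℂ)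
          (E := lp (fun _ : ℕ => 𝔏) 2) (F := lp (fun _ : ℕ => 𝔏) 2) ℂ).symm ⁻¹'
        closure (⇑(ContinuousLinearMapWOT.linearEquiv (σ := RingHom.id ℂ)
          (E := lp (fun _ : ℕ => 𝔏) 2) (F := lp (fun _ : ℕ => 𝔏) 2) ℂ).symm ''
          (Submodule.span ℂ
            {X0 : lp (fun _ : ℕ => 𝔏) 2 →L[ℂ] lp (fun _ : ℕ => 𝔏) 2 |
              ∃ (n : ℕ) (L : 𝔏 →L[ℂ] 𝔏), A ∘L L = (‖l‖ : ℂ) • (L ∘L A) ∧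
                ∀ x : lp (fun _ : ℕ => 𝔏) 2,
                  (∀ j : ℕ, j < n → (X0 x) j = 0) ∧
                  ∀ k : ℕ, (X0 x) (k + n) =
                    l ^ (-(k : ℤ)) • (A ^ k) (L ((B ^ k) (x k)))} : Set _)) := by
  have hAU_inj : Function.Injective AU := (isWeightedShift_addRight_one hAU).injective
    (Equiv.injective _) fun _ => Function.LeftInverse.injective (g := B) (DFunLike.congr_fun hBA)
  exact lifting_extended_eigenvector_iff_weakStar_closure_general A hApos B hAB ι hι₁ hι₂ AU hAU l
    (ne_zero_of_mem_extSpectrum hAU_inj hl) X
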